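/- arXiv:1404.1757 — 2 statements merged into one kernel-verified Lean document; each statement's English description precedes it below -/
import Mathlib

section
/- Let J be a Borel-fixed monomial ideal of k[x_0,…,x_n] and let e be an integer with 1 ≤ e ≤ n. Assume that for every m with 0 ≤ m ≤ n−e the iterated section ideal J^(m) contains no monomial of degree ≤ 1. Then for every minimal generator m of J of degree 3 with max(m) = n−1, the degree-2 monomial T := m/x_{n−1} satisfies max(T) ≤ e−1. -/
/-!
The argument is by contradiction. If `max T ≥ e`, then `m = x_a x_b x_{n-1}` with
`e ≤ b ≤ n - 1`; in particular `e < n`. Moving `x_a` to `x_0` and both `x_b` and `x_{n-1}` to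
`x_e` by the Borel-fixed property gives `x_0 x_e ^ 2 ∈ J`. A monomial of an ideal that does not
involve the last variable lies in the section ideal (exponent `c = 0`), so `x_0 x_e ^ 2` persists
in `J^(i)` for all `i < n - e` (`mem_iterSect`). The ideal `J^(n-e-1)` lives in the variables
`x_0, …, x_{e+1}`, so the next section inverts exactly `x_e` and contains the linear form `x_0`,
contradicting the hypothesis for `J^(n-e)`.
-/

/-- The exponent vector of a monomial in the `N` variables `x_0, …, x_{N-1}`. -/
abbrev Mon (N : ℕ) : Type := Fin N → ℕ

/-- The total degree of a monomial. -/
def mdeg {N : ℕ} (m : Mon N) : ℕ := ∑ i, m i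

/-- `mmax m` is the largest index `i` such that `x_i` divides `m` (`0` if `m = 1`). -/
def mmax {N : ℕ} (m : Mon N) : ℕ :=
  (Finset.univ.filter fun i : Fin N => 0 < m i).sup fun i => (i : ℕ)

/-- `J` is the set of monomials of a monomial ideal: membership is stable under
multiplication by arbitrary monomials. -/
def IsMonomialIdeal {N : ℕ} (J : Set (Mon N)) : Prop :=
  ∀ m ∈ J, ∀ t : Mon N, m + t ∈ J

/-- Borel-fixed property (characteristic-zero combinatorial definition): if `m ∈ J`,
`x_i ∣ m` and `j ≤ i` then `(m / x_i) * x_j ∈ J`. -/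
def IsBorelFixed {N : ℕ} (J : Set (Mon N)) : Prop :=
  ∀ (m : Mon N) (i j : Fin N), j ≤ i → m + Pi.single i 1 ∈ J → m + Pi.single j 1 ∈ J

/-- `m` is a minimal generator of the monomial ideal `J`. -/
def IsMinGen {N : ℕ} (J : Set (Mon N)) (m : Mon N) : Prop :=
  m ∈ J ∧ ∀ ℓ : Fin N, 0 < m ℓ → m - Pi.single ℓ 1 ∉ J

/-- `𝒢(J)_d`: the set of minimal generators of `J` of degree `d`. -/
def minGens {N : ℕ} (J : Set (Mon N)) (d : ℕ) : Set (Mon N) :=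
  {m | IsMinGen J m ∧ mdeg m = d}

/-- `ℳ_i(d, J)`: the set of minimal generators of `J` of degree `d` with `max = i`. -/
def Mset {N : ℕ} (J : Set (Mon N)) (d i : ℕ) : Set (Mon N) :=
  {m | IsMinGen J m ∧ mdeg m = d ∧ mmax m = i}

/-- `J ⊆ k[x_0, …, x_K]` is saturated with respect to the last variable `x_K`. -/
def IsSatLast {K : ℕ} (J : Set (Mon (K + 1))) : Prop :=
  ∀ m : Mon (K + 1), m + Pi.single (Fin.last K) 1 ∈ J → m ∈ J

/-- The section ideal `J′ ⊆ k[x_0, …, x_{K-1}]` of `J ⊆ k[x_0, …, x_K]`, whose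
monomials are the monomials `m` in `x_0, …, x_{K-1}` with `m * x_{K-1} ^ c ∈ J`
for some `c ≥ 0`. -/
def sectIdeal {K : ℕ} (J : Set (Mon (K + 1))) : Set (Mon K) :=
  {m | ∃ c : ℕ,
    (Fin.snoc m 0 : Mon (K + 1)) + Pi.single (⟨K - 1, by omega⟩ : Fin (K + 1)) c ∈ J}

/-- Auxiliary form of the section ideal, allowing a degenerate number of variables. -/
def sectPred : {K : ℕ} → Set (Mon K) → Set (Mon (K - 1))
  | 0, J => J
  | _ + 1, J => sectIdeal J

/-- The iterated section ideal `J^(m) ⊆ k[x_0, …, x_{N-1-m}]`. -/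
def iterSect {N : ℕ} (J : Set (Mon N)) : (m : ℕ) → Set (Mon (N - m))
  | 0 => J
  | m + 1 => sectPred (iterSect J m)

/-- A monomial of `J` whose last exponent vanishes gives a monomial of the section ideal after
lowering its next-to-last exponent by an arbitrary amount `c`. Exponent vectors are written as
restrictions of functions `ℕ → ℕ`, so that the number of variables can vary freely. -/
lemma mem_sectPred {K : ℕ} (J : Set (Mon K)) (hK : 0 < K) (f g : ℕ → ℕ) (c : ℕ)
    (hf : (fun i : Fin K => f i) ∈ J) (h0 : f (K - 1) = 0) (hK2 : 2 ≤ K)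
    (hg : ∀ i, i < K - 1 → f i = g i + if i = K - 2 then c else 0) :
    (fun i : Fin (K - 1) => g i) ∈ sectPred J := by
  obtain _ | K := K
  · omega
  suffices key : (Fin.snoc (fun i : Fin K => g i) 0 : Mon (K + 1)) +
      Pi.single (⟨K - 1, by omega⟩ : Fin (K + 1)) c = fun i : Fin (K + 1) => f i from
    ⟨c, (congrArg (· ∈ J) key).mpr hf⟩
  funext i
  simp only [Pi.add_apply, Pi.single_apply, Fin.ext_iff]
  refine Fin.lastCases ?_ (fun j => ?_) i
  · have h : ¬ K = K - 1 := by omega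
    simp only [Nat.add_sub_cancel] at h0
    simp [h0, h]
  · have := hg j (by have := j.2; omega)
    simp only [Fin.snoc_castSucc, Fin.val_castSucc]
    rw [this]
    rfl

/-- A monomial of `J` supported on `x_0, …, x_e` belongs to every iterated section ideal
whose ambient ring has a variable beyond `x_e`. -/
lemma mem_iterSect {N : ℕ} (J : Set (Mon N)) (f : ℕ → ℕ) (e : ℕ)
    (hf : (fun i : Fin N => f i) ∈ J) (h0 : ∀ i, e < i → f i = 0) :
    ∀ m, e + 1 + m < N → (fun i : Fin (N - m) => f i) ∈ iterSect J m := by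
  intro m
  induction m with
  | zero => exact fun _ => hf
  | succ m ih =>
    intro hm
    exact mem_sectPred (iterSect J m) (by omega) f f 0 (ih (by omega)) (h0 _ (by omega))
      (by omega) (by simp)

lemma sub_single_add {N : ℕ} (m : Mon N) (i : Fin N) (h : 0 < m i) :
    m - Pi.single i 1 + Pi.single i 1 = m := by
  funext j
  by_cases hj : j = i
  · subst hj; simp; omega
  · simp [hj]

lemma mdeg_add_single {N : ℕ} (m : Mon N) (i : Fin N) :
    mdeg (m + Pi.single i 1) = mdeg m + 1 := by
  simp [mdeg, Finset.sum_add_distrib]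

lemma exists_pos {N : ℕ} (m : Mon N) (h : 0 < mdeg m) : ∃ i, 0 < m i := by
  by_contra! hc
  have : mdeg m = 0 := Finset.sum_eq_zero fun i _ => Nat.le_zero.mp (hc i)
  omega

/-- Proposition 3.6 (a), generic-initial-ideal form. Let `J` be
Borel-fixed, `1 ≤ e ≤ n`, and suppose that for every `0 ≤ m ≤ n - e` the iterated
section ideal `J^(m)` contains no monomial of degree `≤ 1`. Then for every minimal
generator `m` of `J` of degree `3` with `max m = n - 1`, the degree-2 monomial
`T = m / x_{n-1}` satisfies `max T ≤ e - 1`. -/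
theorem stmt7 {n : ℕ} (hn : 1 ≤ n) (J : Set (Mon (n + 1)))
    (hJ : IsMonomialIdeal J) (hB : IsBorelFixed J)
    (e : ℕ) (he1 : 1 ≤ e) (hen : e ≤ n)
    (hND : ∀ m : ℕ, m ≤ n - e → ∀ T ∈ iterSect J m, ¬ mdeg T ≤ 1) :
    ∀ m ∈ Mset J 3 (n - 1),
      mmax (m - Pi.single (⟨n - 1, by omega⟩ : Fin (n + 1)) 1) ≤ e - 1 := by
  rintro m ⟨⟨hmJ, -⟩, hdeg, hmax⟩
  by_contra! hlt
  set p : Fin (n + 1) := ⟨n - 1, by omega⟩ with hp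
  obtain ⟨b, hb, heb⟩ := Finset.lt_sup_iff.mp hlt
  simp only [Finset.mem_filter, Finset.mem_univ, true_and] at hb
  have hmb : 0 < m b := lt_of_lt_of_le hb (by simp)
  have hbn : (b : ℕ) ≤ n - 1 := by
    rw [← hmax]
    exact Finset.le_sup (f := fun i : Fin (n + 1) => (i : ℕ))
      (Finset.mem_filter.mpr ⟨Finset.mem_univ b, hmb⟩)
  have hmp : 0 < m p := by
    obtain ⟨q, hq, hqe⟩ := Finset.exists_mem_eq_sup
      (Finset.univ.filter fun i : Fin (n + 1) => 0 < m i)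
      ⟨b, Finset.mem_filter.mpr ⟨Finset.mem_univ b, hmb⟩⟩ (fun i => (i : ℕ))
    have hqp : q = p := Fin.ext (hqe.symm.trans hmax)
    exact hqp ▸ (Finset.mem_filter.mp hq).2
  -- Factor `m` as `x_a x_b x_{n-1}`, the remaining cofactor `S` being `1`.
  obtain ⟨T, hT⟩ : ∃ T, T = m - Pi.single p 1 := ⟨_, rfl⟩
  rw [← hT] at hb
  have hm : T + Pi.single p 1 = m := hT ▸ sub_single_add m p hmp
  obtain ⟨U, hU⟩ : ∃ U, U = T - Pi.single b 1 := ⟨_, rfl⟩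
  have hTU : U + Pi.single b 1 = T := hU ▸ sub_single_add T b hb
  have hUd : mdeg U = 1 := by
    rw [← hm, mdeg_add_single, ← hTU, mdeg_add_single] at hdeg
    omega
  obtain ⟨a, ha⟩ := exists_pos U (by omega)
  obtain ⟨S, hS⟩ : ∃ S, S = U - Pi.single a 1 := ⟨_, rfl⟩
  have hUS : S + Pi.single a 1 = U := hS ▸ sub_single_add U a ha
  have hS0 : S = 0 := by
    rw [← hUS, mdeg_add_single] at hUd
    by_contra hne
    obtain ⟨i, hi⟩ := Function.ne_iff.mp hne
    have : S i ≤ mdeg S := Finset.single_le_sum (fun _ _ => Nat.zero_le _) (Finset.mem_univ i)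
    simp only [Pi.zero_apply] at hi
    omega
  subst hS0
  rw [zero_add] at hUS
  rw [← hm, ← hTU, ← hUS] at hmJ
  let E : Fin (n + 1) := ⟨e, by omega⟩
  have h1 : Pi.single a 1 + Pi.single b 1 + Pi.single E 1 ∈ J :=
    hB _ p E (by rw [Fin.le_def]; simp only [E, hp]; omega) hmJ
  have h2 : Pi.single E 1 + Pi.single a 1 + Pi.single E 1 ∈ J := by
    have := hB (Pi.single a 1 + Pi.single E 1) b E
      (by rw [Fin.le_def]; simp only [E]; omega) (by rwa [add_right_comm])
    rwa [add_comm (Pi.single E 1) (Pi.single a 1), add_right_comm]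
  have h3 : Pi.single E 1 + Pi.single E 1 + Pi.single 0 1 ∈ J :=
    hB _ a 0 (Fin.zero_le _) (by rwa [add_right_comm])
  let f : ℕ → ℕ := fun i => (if i = 0 then 1 else 0) + if i = e then 2 else 0
  let g : ℕ → ℕ := fun i => if i = 0 then 1 else 0
  have hfJ : (fun i : Fin (n + 1) => f i) ∈ J := by
    convert h3 using 1
    funext i
    simp only [f, E, Pi.add_apply, Pi.single_apply, Fin.ext_iff, Fin.val_zero]
    split_ifs <;> omega
  have hf0 : ∀ i, e < i → f i = 0 := by
    intro i hi
    simp only [f]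
    split_ifs <;> omega
  have hit := mem_iterSect J f e hfJ hf0 (n - e - 1) (by omega)
  have hg : (fun i : Fin (n + 1 - (n - e - 1) - 1) => g i) ∈ iterSect J (n - e - 1 + 1) := by
    refine mem_sectPred (K := n + 1 - (n - e - 1)) _ (by omega) f g 2 hit (hf0 _ (by omega)) (by omega) ?_
    intro i _
    have : n + 1 - (n - e - 1) - 2 = e := by omega
    rw [this]
  refine hND (n - e - 1 + 1) (by omega) _ hg ?_
  have hpos : 0 < n + 1 - (n - e - 1) - 1 := by omega
  change ∑ i : Fin (n + 1 - (n - e - 1) - 1), g i ≤ 1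
  rw [Finset.sum_eq_single (⟨0, hpos⟩ : Fin (n + 1 - (n - e - 1) - 1))]
  · simp [g]
  · intro i _ hi
    have : (i : ℕ) ≠ 0 := fun h => hi (Fin.ext h)
    simp [g, this]
  · simp
end

section
/- Let J be a Borel-fixed monomial ideal of k[x_0,…,x_n] which is x_n-saturated, contains no monomial of degree ≤ 1, and all of whose minimal generators have degree at most 3. Let J′ ⊆ k[x_0,…,x_{n−1}] be its section ideal and assume J′ also contains no monomial of degree ≤ 1. Write ℳ_{n−1}(3,J) = {T_1·x_{n−1},…,T_r·x_{n−1}} with pairwise distinct degree-2 monomials T_1,…,T_r, let e be an integer with 1 ≤ e ≤ n, and assume max(T_k) ≤ e−1 for every 1 ≤ k ≤ r. Then for every i with e−1 ≤ i ≤ n−1, the set ℳ_i(3, J) is the disjoint union of ℳ_i(3, J′) and {T_1·x_i,…,T_r·x_i}; in particular |ℳ_i(3,J)| = |ℳ_i(3,J′)| + r. -/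
theorem mdeg_add {N : ℕ} (a b : Mon N) : mdeg (a + b) = mdeg a + mdeg b := by
  simp [mdeg, Finset.sum_add_distrib]

theorem mdeg_single {N : ℕ} (i : Fin N) (c : ℕ) : mdeg (Pi.single i c : Mon N) = c := by
  simp [mdeg]

theorem mdeg_mono {N : ℕ} {a b : Mon N} (h : a ≤ b) : mdeg a ≤ mdeg b :=
  Finset.sum_le_sum fun i _ => h i

theorem mdeg_snoc {N : ℕ} (m : Mon N) : mdeg (Fin.snoc m 0 : Mon (N + 1)) = mdeg m := by
  simp [mdeg, Fin.sum_univ_castSucc]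

theorem sub_add_single {N : ℕ} {m : Mon N} {l : Fin N} (h : 0 < m l) :
    m - Pi.single l 1 + Pi.single l 1 = m := by
  funext j
  by_cases hj : j = l
  · subst hj; simp; omega
  · simp [hj]

theorem add_single_sub {N : ℕ} (m : Mon N) (l : Fin N) :
    m + Pi.single l 1 - Pi.single l 1 = m := by
  funext j; simp

theorem snoc_add_single {N : ℕ} (m : Mon N) (l : Fin N) :
    (Fin.snoc (m + Pi.single l 1) 0 : Mon (N + 1))
      = Fin.snoc m 0 + Pi.single l.castSucc 1 := by
  funext j
  refine Fin.lastCases ?_ (fun j => ?_) j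
  · simp [(Fin.castSucc_lt_last l).ne']
  · simp [Pi.single_apply]

theorem snoc_castSucc {N : ℕ} {m : Mon (N + 1)} (h : m (Fin.last N) = 0) :
    (Fin.snoc (fun j => m j.castSucc) 0 : Mon (N + 1)) = m := by
  funext j
  refine Fin.lastCases ?_ (fun j => ?_) j
  · simp [h]
  · simp

theorem snoc_zero_injective {N : ℕ} :
    Function.Injective fun m : Mon N => (Fin.snoc m 0 : Mon (N + 1)) := by
  intro a b h
  funext j
  simpa using congrFun h j.castSucc

theorem le_mmax {N : ℕ} {m : Mon N} {l : Fin N} (h : 0 < m l) : (l : ℕ) ≤ mmax m :=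
  Finset.le_sup (f := fun i : Fin N => (i : ℕ)) (by simp [h])

/-- The index `mmax m` is attained as soon as `m ≠ 1`. -/
theorem pos_of_mmax {N : ℕ} {m : Mon N} {i : Fin N} (hd : 0 < mdeg m) (h : mmax m = i) :
    0 < m i := by
  have hne : (Finset.univ.filter fun i : Fin N => 0 < m i).Nonempty := by
    by_contra hc
    rw [Finset.not_nonempty_iff_eq_empty, Finset.filter_eq_empty_iff] at hc
    have : mdeg m = 0 := Finset.sum_eq_zero fun j hj => by simpa using hc hj
    omega
  obtain ⟨j, hj, hje⟩ := Finset.exists_mem_eq_sup _ hne fun i : Fin N => (i : ℕ)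
  have hji : j = i := Fin.ext (hje.symm.trans h)
  subst hji
  simpa using hj

theorem mmax_eq {N : ℕ} {m : Mon N} {i : Fin N} (hi : 0 < m i)
    (h : ∀ l, 0 < m l → l ≤ i) : mmax m = i :=
  le_antisymm (Finset.sup_le fun l hl => h l (by simpa using hl)) (le_mmax hi)

theorem mmax_snoc {N : ℕ} (m : Mon N) : mmax (Fin.snoc m 0 : Mon (N + 1)) = mmax m := by
  apply le_antisymm
  · refine Finset.sup_le fun l => ?_
    refine Fin.lastCases ?_ (fun l => ?_) l
    · simp
    · intro hl
      exact le_mmax (by simpa using hl)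
  · refine Finset.sup_le fun l hl => ?_
    exact le_mmax (m := (Fin.snoc m 0 : Mon (N + 1))) (l := l.castSucc) (by simpa using hl)

theorem mem_of_le {N : ℕ} {J : Set (Mon N)} (hJ : IsMonomialIdeal J) {a b : Mon N}
    (ha : a ∈ J) (h : a ≤ b) : b ∈ J := by
  have := hJ a ha (b - a)
  rwa [add_tsub_cancel_of_le h] at this

theorem exists_isMinGen_le {N : ℕ} {J : Set (Mon N)} (d : ℕ) :
    ∀ m ∈ J, mdeg m = d → ∃ g, IsMinGen J g ∧ g ≤ m := by
  induction d with
  | zero =>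
    intro m hm hd
    refine ⟨m, ⟨hm, fun l hl => ?_⟩, le_rfl⟩
    have : m l ≤ mdeg m := Finset.single_le_sum (fun _ _ => Nat.zero_le _) (Finset.mem_univ l)
    omega
  | succ d ih =>
    intro m hm hd
    by_cases h : ∃ l, 0 < m l ∧ m - Pi.single l 1 ∈ J
    · obtain ⟨l, hl, hlJ⟩ := h
      have hdeg := congrArg mdeg (sub_add_single hl)
      rw [mdeg_add, mdeg_single] at hdeg
      obtain ⟨g, hg, hgm⟩ := ih _ hlJ (by omega)
      exact ⟨g, hg, hgm.trans tsub_le_self⟩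
    · push Not at h
      exact ⟨m, ⟨hm, h⟩, le_rfl⟩

/-- If `m ∉ J` but `m * x_i ∈ J` with `max m ≤ i`, then `m * x_i` is a minimal generator:
otherwise `m * x_i / x_l ∈ J` and the Borel move from `x_i` to `x_l` gives `m ∈ J`. -/
theorem isMinGen_add_single {N : ℕ} {J : Set (Mon N)} (hB : IsBorelFixed J) {m : Mon N}
    {i : Fin N} (hm : m ∉ J) (hmi : m + Pi.single i 1 ∈ J) (h : ∀ l, 0 < m l → l ≤ i) :
    IsMinGen J (m + Pi.single i 1) := by
  refine ⟨hmi, fun l hl hmem => hm ?_⟩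
  by_cases hli : l = i
  · subst hli
    rwa [add_single_sub] at hmem
  · have hl' : 0 < m l := by simpa [hli] using hl
    have e : m + Pi.single i 1 - Pi.single l 1 = m - Pi.single l 1 + Pi.single i 1 := by
      conv_lhs => rw [← sub_add_single hl', add_right_comm]
      exact add_single_sub _ _
    rw [e] at hmem
    have := hB _ i l (h l hl') hmem
    rwa [sub_add_single hl'] at this

theorem finite_mdeg {N : ℕ} (d : ℕ) : {m : Mon N | mdeg m = d}.Finite := by
  refine (Set.finite_Iic (fun _ => d : Mon N)).subset fun m hm l => ?_
  rw [← (show mdeg m = d from hm)]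
  exact Finset.single_le_sum (f := m) (fun _ _ => Nat.zero_le _) (Finset.mem_univ l)

/-- Under the degree hypotheses, the saturation defining `J′` is the colon ideal by a single
`x_{n-1}`: a generator dividing `m * x_{n-1} ^ c` but not `m * x_{n-1}` would exceed by two
degrees its common part with `m`, a monomial of `J′`, which has degree at least 2. -/
theorem mem_sectIdeal_iff {n : ℕ} (hn : 1 ≤ n) {J : Set (Mon (n + 1))} (hJ : IsMonomialIdeal J)
    (hgen : ∀ m : Mon (n + 1), IsMinGen J m → mdeg m ≤ 3)
    (hJ'1 : ∀ T ∈ sectIdeal J, ¬ mdeg T ≤ 1) {p : Fin (n + 1)} (hp : (p : ℕ) = n - 1)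
    (m : Mon n) :
    m ∈ sectIdeal J ↔ (Fin.snoc m 0 : Mon (n + 1)) + Pi.single p 1 ∈ J := by
  have hmem : ∀ m : Mon n, m ∈ sectIdeal J ↔
      ∃ c, (Fin.snoc m 0 : Mon (n + 1)) + Pi.single p c ∈ J := by
    intro m
    unfold sectIdeal
    simp only [← hp, Set.mem_ofPred_eq, Fin.eta]
  rw [hmem]
  refine ⟨?_, fun h => ⟨1, h⟩⟩
  rintro ⟨c, hc⟩
  obtain ⟨q, rfl⟩ : ∃ q : Fin n, p = q.castSucc := ⟨⟨p, by omega⟩, rfl⟩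
  have hql : Fin.last n ≠ q.castSucc := (Fin.castSucc_lt_last q).ne'
  obtain ⟨g, hg, hgm⟩ := exists_isMinGen_le _ _ hc rfl
  have hgl : g (Fin.last n) = 0 := by simpa [hql] using hgm (Fin.last n)
  have hgj : ∀ j, g j.castSucc ≤ m j + if j = q then c else 0 := fun j => by
    simpa [Pi.single_apply] using hgm j.castSucc
  set g' : Mon n := fun j => min (g j.castSucc) (m j) with hg'
  have hg'J : g' ∈ sectIdeal J := by
    rw [hmem]
    refine ⟨c, mem_of_le hJ hg.1 ?_⟩
    refine Fin.lastCases ?_ fun j => ?_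
    · simp [hgl]
    · have := hgj j
      simp only [Pi.add_apply, Fin.snoc_castSucc, hg', Pi.single_apply, Fin.castSucc_inj]
      split_ifs at this ⊢ <;> omega
  have h2 := hJ'1 _ hg'J
  have h3 := hgen g hg
  refine mem_of_le hJ hg.1 ?_
  by_contra hcon
  have hgq : m q + 2 ≤ g q.castSucc := by
    by_contra hlt
    apply hcon
    refine Fin.lastCases ?_ fun j => ?_
    · simp [hgl]
    · have := hgj j
      simp only [Pi.add_apply, Fin.snoc_castSucc, Pi.single_apply, Fin.castSucc_inj]
      split_ifs at this ⊢ with hj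
      · subst hj; omega
      · omega
  have hle : (Fin.snoc g' 0 : Mon (n + 1)) + Pi.single q.castSucc 2 ≤ g := by
    refine Fin.lastCases ?_ fun j => ?_
    · simp [hql]
    · simp only [Pi.add_apply, Fin.snoc_castSucc, hg', Pi.single_apply, Fin.castSucc_inj]
      split_ifs with hj
      · subst hj; omega
      · omega
  have := mdeg_mono hle
  rw [mdeg_add, mdeg_single, mdeg_snoc] at this
  omega

/-- The cubic minimal generators of `J′` are those of `J` not divisible by any `T_a`. Here
`hcolon` says `J′ = (J : x_p)`, and `hlow`, `hT2` that a monomial of `(J : x_p)` outside `J` has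
degree at most 2 and, in degree 2, is some `T_a`. -/
theorem isMinGen_sectIdeal_iff {n r : ℕ} {J : Set (Mon (n + 1))}
    {T : Fin r → Mon (n + 1)} {p : Fin (n + 1)}
    (hcolon : ∀ m : Mon n, m ∈ sectIdeal J ↔ (Fin.snoc m 0 : Mon (n + 1)) + Pi.single p 1 ∈ J)
    (hJ : IsMonomialIdeal J)
    (hlow : ∀ m : Mon (n + 1), m (Fin.last n) = 0 → m ∉ J → m + Pi.single p 1 ∈ J → mdeg m ≤ 2)
    (hT2 : ∀ m : Mon (n + 1), m (Fin.last n) = 0 → m ∉ J → m + Pi.single p 1 ∈ J →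
      mdeg m = 2 → ∃ a, m = T a)
    (hTp : ∀ a, T a + Pi.single p 1 ∈ J) {m : Mon n} (hm : mdeg m = 3) :
    IsMinGen (sectIdeal J) m ↔ IsMinGen J (Fin.snoc m 0 : Mon (n + 1)) ∧
      ∀ a l, (Fin.snoc m 0 : Mon (n + 1)) ≠ T a + Pi.single l 1 := by
  constructor
  · rintro ⟨h1, h2⟩
    rw [hcolon] at h1
    -- a variable dividing `m` can be divided out inside the smaller ring
    have key : ∀ (l : Fin (n + 1)) (y : Mon (n + 1)), (Fin.snoc m 0 : Mon (n + 1)) = y + Pi.single l 1 →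
        y + Pi.single p 1 ∉ J := by
      intro l y
      refine Fin.lastCases ?_ (fun l => ?_) l
      · intro h
        simpa using congrFun h (Fin.last n)
      · intro h hy
        have hl : 0 < m l := by
          have := congrFun h l.castSucc
          simp at this
          omega
        apply h2 l hl
        rw [hcolon]
        rw [← sub_add_single hl, snoc_add_single] at h
        rwa [add_right_cancel h]
    refine ⟨⟨?_, fun l hl hlJ => ?_⟩, fun a l h => key l _ h (hTp a)⟩
    · by_contra hc
      have := hlow _ (by simp) hc h1
      rw [mdeg_snoc] at this
      omega
    · exact key l _ (sub_add_single hl).symm (hJ _ hlJ _)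
  · rintro ⟨h1, h2⟩
    refine ⟨(hcolon m).2 (hJ _ h1.1 _), fun l hl hlJ => ?_⟩
    rw [hcolon] at hlJ
    have e : (Fin.snoc m 0 : Mon (n + 1))
        = Fin.snoc (m - Pi.single l 1) 0 + Pi.single l.castSucc 1 := by
      rw [← snoc_add_single, sub_add_single hl]
    have hd := congrArg mdeg e
    rw [mdeg_add, mdeg_single, mdeg_snoc, hm] at hd
    have hnot : (Fin.snoc (m - Pi.single l 1) 0 : Mon (n + 1)) ∉ J := by
      have := h1.2 l.castSucc (by simpa using hl)
      rwa [e, add_single_sub] at this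
    obtain ⟨a, ha⟩ := hT2 _ (by simp) hnot hlJ (by omega)
    exact h2 a l.castSucc (by rw [e, ha])

/-- Proposition 3.6 (e), generic-initial-ideal form. Let
`J ⊆ k[x_0, …, x_n]` be Borel-fixed, `x_n`-saturated, with no monomial of degree `≤ 1`
and all minimal generators of degree `≤ 3`; assume the section ideal `J′` also has no
monomial of degree `≤ 1`. Write `ℳ_{n-1}(3, J) = {T_1 x_{n-1}, …, T_r x_{n-1}}` with
pairwise distinct degree-2 monomials `T_a`, let `1 ≤ e ≤ n` and assume
`max T_a ≤ e - 1` for all `a`. Then for every index `i` with `e - 1 ≤ i ≤ n - 1`, the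
set `ℳ_i(3, J)` is the disjoint union of `ℳ_i(3, J′)` (viewed inside
`k[x_0, …, x_n]`) and `{T_1 x_i, …, T_r x_i}`; in particular
`|ℳ_i(3, J)| = |ℳ_i(3, J′)| + r`. -/
theorem stmt11 {n : ℕ} (hn : 1 ≤ n) (J : Set (Mon (n + 1)))
    (hJ : IsMonomialIdeal J) (hB : IsBorelFixed J) (hsat : IsSatLast J)
    (hJ1 : ∀ T ∈ J, ¬ mdeg T ≤ 1)
    (hgen : ∀ m : Mon (n + 1), IsMinGen J m → mdeg m ≤ 3)
    (hJ'1 : ∀ T ∈ sectIdeal J, ¬ mdeg T ≤ 1)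
    (r : ℕ) (T : Fin r → Mon (n + 1)) (hTinj : Function.Injective T)
    (hTdeg : ∀ a : Fin r, mdeg (T a) = 2)
    (hM : Mset J 3 (n - 1)
      = Set.range fun a : Fin r =>
          T a + Pi.single (⟨n - 1, by omega⟩ : Fin (n + 1)) 1)
    (e : ℕ) (he1 : 1 ≤ e) (hen : e ≤ n)
    (hTmax : ∀ a : Fin r, mmax (T a) ≤ e - 1) :
    ∀ i : Fin (n + 1), e - 1 ≤ (i : ℕ) → (i : ℕ) ≤ n - 1 →
      (Mset J 3 (i : ℕ)
          = ((fun m : Mon n => (Fin.snoc m 0 : Mon (n + 1)))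
                '' Mset (sectIdeal J) 3 (i : ℕ))
            ∪ Set.range (fun a : Fin r => T a + Pi.single i 1)) ∧
        ((fun m : Mon n => (Fin.snoc m 0 : Mon (n + 1)))
              '' Mset (sectIdeal J) 3 (i : ℕ))
            ∩ Set.range (fun a : Fin r => T a + Pi.single i 1) = ∅ ∧
        (Mset J 3 (i : ℕ)).ncard = (Mset (sectIdeal J) 3 (i : ℕ)).ncard + r := by
  intro i hei hin
  set p : Fin (n + 1) := ⟨n - 1, by omega⟩ with hp
  have hcolon := mem_sectIdeal_iff hn hJ hgen hJ'1 (p := p) rfl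
  have hlt : ∀ {m : Mon (n + 1)}, m (Fin.last n) = 0 → ∀ l, 0 < m l → l ≤ p := by
    intro m hm l hl
    have : l ≠ Fin.last n := fun h => by rw [h] at hl; omega
    have := Fin.val_lt_last this
    rw [Fin.le_def]
    simp only [hp]
    omega
  have hTgen : ∀ a, T a + Pi.single p 1 ∈ Mset J 3 (n - 1) := fun a => by
    rw [hM]; exact ⟨a, rfl⟩
  have hTp : ∀ a, T a + Pi.single p 1 ∈ J := fun a => (hTgen a).1.1
  have hTJ : ∀ a, T a ∉ J := fun a => by
    have := (hTgen a).1.2 p (by simp)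
    rwa [add_single_sub] at this
  have hmin : ∀ m : Mon (n + 1), m (Fin.last n) = 0 → m ∉ J → m + Pi.single p 1 ∈ J →
      IsMinGen J (m + Pi.single p 1) := fun m hl hm hmp =>
    isMinGen_add_single hB hm hmp (hlt hl)
  have hlow : ∀ m : Mon (n + 1), m (Fin.last n) = 0 → m ∉ J → m + Pi.single p 1 ∈ J →
      mdeg m ≤ 2 := fun m hl hm hmp => by
    have := hgen _ (hmin m hl hm hmp)
    rw [mdeg_add, mdeg_single] at this
    omega
  have hT2 : ∀ m : Mon (n + 1), m (Fin.last n) = 0 → m ∉ J → m + Pi.single p 1 ∈ J →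
      mdeg m = 2 → ∃ a, m = T a := fun m hl hm hmp hd => by
    have : m + Pi.single p 1 ∈ Mset J 3 (n - 1) := by
      refine ⟨hmin m hl hm hmp, by rw [mdeg_add, mdeg_single, hd], ?_⟩
      refine mmax_eq (i := p) (by simp) fun l hl' => ?_
      by_cases h : l = p
      · exact h.le
      · exact hlt hl l (by simpa [h] using hl')
    rw [hM] at this
    obtain ⟨a, ha⟩ := this
    exact ⟨a, (add_right_cancel ha).symm⟩
  have hsect : ∀ m : Mon n, mdeg m = 3 → _ := fun m hm =>
    isMinGen_sectIdeal_iff hcolon hJ hlow hT2 hTp hm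
  have hTle : ∀ a l, 0 < T a l → l ≤ i := fun a l hl => by
    have h1 := le_mmax hl
    have h2 := hTmax a
    rw [Fin.le_def]
    omega
  have hip : i ≤ p := hin
  have hTi : ∀ a, T a + Pi.single i 1 ∈ Mset J 3 (i : ℕ) := fun a => by
    refine ⟨isMinGen_add_single hB (hTJ a) (hB _ p i hip (hTp a)) (hTle a),
      by rw [mdeg_add, mdeg_single, hTdeg], mmax_eq (by simp) fun l hl => ?_⟩
    by_cases h : l = i
    · exact h.le
    · exact hTle a l (by simpa [h] using hl)
  have hunion : Mset J 3 (i : ℕ)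
      = ((fun m : Mon n => (Fin.snoc m 0 : Mon (n + 1))) '' Mset (sectIdeal J) 3 (i : ℕ))
        ∪ Set.range (fun a : Fin r => T a + Pi.single i 1) := by
    apply Set.Subset.antisymm
    · rintro x ⟨hx, hxd, hxm⟩
      have hxl : x (Fin.last n) = 0 := by
        by_contra hc
        have := le_mmax (Nat.pos_of_ne_zero hc)
        rw [Fin.val_last] at this
        omega
      by_cases hdiv : ∃ a l, x = T a + Pi.single l 1
      · right
        obtain ⟨a, l, hal⟩ := hdiv
        have hxi : 0 < x i := pos_of_mmax (by omega) hxm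
        have hli : l ≤ i := by
          have : 0 < x l := by rw [hal]; simp
          have := le_mmax this
          rw [Fin.le_def]; omega
        have hd := congrArg mdeg (sub_add_single hxi)
        rw [mdeg_add, mdeg_single] at hd
        have hyp : x - Pi.single i 1 + Pi.single p 1 ∈ J := by
          by_cases h : l = i
          · rw [hal, h, add_single_sub]; exact hTp a
          · have hTai : 0 < T a i := by
              have : i ≠ l := fun h' => h h'.symm
              rw [hal] at hxi
              simpa [this] using hxi
            -- the Borel move from `x_i` to `x_l` applied to `T a * x_p`
            have hmove := hTp a
            rw [← sub_add_single hTai, add_right_comm] at hmove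
            have hmove := hB _ i l hli hmove
            have e : x - Pi.single i 1 = T a - Pi.single i 1 + Pi.single l 1 := by
              rw [hal]
              conv_lhs => rw [← sub_add_single hTai, add_right_comm]
              exact add_single_sub _ _
            rwa [e, add_right_comm]
        obtain ⟨b, hb⟩ := hT2 _ (by simp [hxl]) (hx.2 i hxi) hyp (by omega)
        exact ⟨b, by simp only [← hb, sub_add_single hxi]⟩
      · left
        push Not at hdiv
        have hsn := snoc_castSucc hxl
        have hd : mdeg (fun j => x j.castSucc : Mon n) = 3 := by rw [← mdeg_snoc, hsn, hxd]
        refine ⟨fun j => x j.castSucc, ⟨?_, hd, ?_⟩, hsn⟩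
        · rw [hsect _ hd, hsn]
          exact ⟨hx, hdiv⟩
        · rw [← mmax_snoc, hsn, hxm]
    · rintro x (⟨m, ⟨hm, hd, hmm⟩, rfl⟩ | ⟨a, rfl⟩)
      · exact ⟨((hsect m hd).1 hm).1, by rw [mdeg_snoc, hd], by rw [mmax_snoc, hmm]⟩
      · exact hTi a
  have hdisj : ((fun m : Mon n => (Fin.snoc m 0 : Mon (n + 1)))
        '' Mset (sectIdeal J) 3 (i : ℕ))
      ∩ Set.range (fun a : Fin r => T a + Pi.single i 1) = ∅ := by
    rw [Set.eq_empty_iff_forall_notMem]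
    rintro x ⟨⟨m, ⟨hm, hd, -⟩, rfl⟩, ⟨a, ha⟩⟩
    exact ((hsect m hd).1 hm).2 a i ha.symm
  refine ⟨hunion, hdisj, ?_⟩
  rw [hunion, Set.ncard_union_eq (Set.disjoint_iff_inter_eq_empty.2 hdisj)
    (((finite_mdeg 3).subset fun m hm => hm.2.1).image _) (Set.finite_range _),
    Set.ncard_image_of_injective _ snoc_zero_injective,
    ← Set.image_univ, Set.ncard_image_of_injective _ fun a b h => hTinj (add_right_cancel h),
    Set.ncard_univ, Nat.card_eq_fintype_card, Fintype.card_fin]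
end
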